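/- Let φ be a continuous flow on a compact metric space X and Λ a compact φ-invariant subset with topological dimension 1. If x ∈ Λ and H is a cross-section of time τ through x such that each point of φ_{[−τ,τ]}(H) lies on a unique arc φ_{[−τ,τ]}(y), y ∈ H (so that φ restricted to [−τ,τ] × K is injective for every compact K ⊆ H), then Λ ∩ H is zero-dimensional. -/

import Mathlib

/-- `DimLE Y n` : the covering dimension of `Y` is at most `n`. -/
def DimLE (Y : Type*) [TopologicalSpace Y] (n : ℕ) : Prop :=
  ∀ (ι : Type) (U : ι → Set Y), (∀ i, IsOpen (U i)) → (⋃ i, U i) = Set.univ →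
    ∃ V : ι → Set Y, (∀ i, IsOpen (V i)) ∧ (∀ i, V i ⊆ U i) ∧
      (⋃ i, V i) = Set.univ ∧ ∀ y : Y, {i | y ∈ V i}.encard ≤ (n : ℕ∞) + 1

/-- Covering dimension does not increase when passing to a closed subspace. -/
theorem DimLE.of_isClosedEmbedding {A B : Type*} [TopologicalSpace A] [TopologicalSpace B]
    {n : ℕ} (hB : DimLE B n) {f : A → B} (hf : Topology.IsClosedEmbedding f) : DimLE A n := by
  intro ι U hU hcov
  cases isEmpty_or_nonempty A with
  | inl _ => exact ⟨U, hU, fun _ ↦ subset_rfl, hcov, fun y ↦ isEmptyElim y⟩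
  | inr _ =>
    choose W hWo hWU using fun i ↦ hf.isInducing.isOpen_iff.mp (hU i)
    obtain ⟨a⟩ := ‹Nonempty A›
    obtain ⟨i₀, -⟩ := Set.mem_iUnion.mp (hcov.symm ▸ Set.mem_univ a : a ∈ ⋃ i, U i)
    obtain ⟨V, hVo, hVW, hVcov, hVcard⟩ := hB ι (fun i ↦ W i ∪ (Set.range f)ᶜ)
      (fun i ↦ (hWo i).union hf.isClosed_range.isOpen_compl) (by
        refine Set.eq_univ_of_forall fun b ↦ ?_
        by_cases hb : b ∈ Set.range f
        · obtain ⟨x, rfl⟩ := hb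
          obtain ⟨i, hi⟩ := Set.mem_iUnion.mp (hcov.symm ▸ Set.mem_univ x : x ∈ ⋃ i, U i)
          rw [← hWU i] at hi
          exact Set.mem_iUnion.mpr ⟨i, Or.inl hi⟩
        · exact Set.mem_iUnion.mpr ⟨i₀, Or.inr hb⟩)
    refine ⟨fun i ↦ f ⁻¹' V i, fun i ↦ (hVo i).preimage hf.continuous, fun i x hx ↦ ?_, ?_,
      fun y ↦ hVcard (f y)⟩
    · rw [← hWU i]
      exact (hVW i hx).resolve_right fun h ↦ h ⟨x, rfl⟩
    · rw [← Set.preimage_iUnion, hVcov, Set.preimage_univ]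

theorem dimLE_zero_of_totallyDisconnectedSpace {K : Type*} [TopologicalSpace K] [T2Space K]
    [CompactSpace K] [TotallyDisconnectedSpace K] : DimLE K 0 := by
  intro ι U hU hcov
  obtain ⟨n, W, hW, hWcov, hWd⟩ :=
    (TopologicalSpace.IsOpenCover.of_sets hU hcov).exists_finite_nonempty_disjoint_clopen_cover
  choose hne r hr using hW
  refine ⟨fun i ↦ ⋃ j, ⋃ (_ : r j = i), (W j : Set K),
    fun i ↦ isOpen_iUnion fun j ↦ isOpen_iUnion fun _ ↦ (W j).isClopen.isOpen, fun i ↦ ?_, ?_, fun y ↦ ?_⟩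
  · refine Set.iUnion₂_subset ?_
    rintro j rfl
    exact hr j
  · refine Set.eq_univ_of_forall fun y ↦ ?_
    obtain ⟨j, hj⟩ := Set.mem_iUnion.mp (hWcov (Set.mem_univ y))
    exact Set.mem_iUnion.mpr ⟨r j, Set.mem_iUnion₂.mpr ⟨j, rfl, hj⟩⟩
  · simp only [Nat.cast_zero, zero_add]
    refine Set.encard_le_one_iff.mpr fun a b ha hb ↦ ?_
    obtain ⟨j, rfl, hj⟩ := Set.mem_iUnion₂.mp ha
    obtain ⟨k, rfl, hk⟩ := Set.mem_iUnion₂.mp hb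
    refine congrArg r (hWd.eq fun h ↦ ?_)
    exact Set.disjoint_left.mp (TopologicalSpace.Clopens.coe_disjoint.mpr h) hj hk

/-- The mod 2 indicator of an edge whose endpoints are labelled `1` and `2`. -/
def edgeParity (i j : Fin 3) : ZMod 2 :=
  if (i = 1 ∧ j = 2) ∨ (i = 2 ∧ j = 1) then 1 else 0

theorem edgeParity_triangle (i j k : Fin 3) (h : ∃ l : Fin 3, l ≠ i ∧ l ≠ j ∧ l ≠ k) :
    edgeParity i j + edgeParity j k + edgeParity i k = 0 := by
  revert i j k
  decide

theorem edgeParity_eq_zero (l i j : Fin 3) (hl : l ≠ 0) (hi : i ≠ l) (hj : j ≠ l) :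
    edgeParity i j = 0 := by
  revert l i j
  decide

theorem edgeParity_eq_sub (i j : Fin 3) (hi : i ≠ 0) (hj : j ≠ 0) :
    edgeParity i j = (if j = 1 then 1 else 0) - (if i = 1 then 1 else 0) := by
  revert i j
  decide

theorem sum_edgeParity_congr (n : ℕ) (u v : ℕ → Fin 3)
    (h : ∀ j < n, (∃ l, l ≠ u j ∧ l ≠ u (j + 1) ∧ l ≠ v (j + 1)) ∧
      ∃ l, l ≠ u j ∧ l ≠ v j ∧ l ≠ v (j + 1))
    (hbot : edgeParity (u 0) (v 0) = 0) (htop : edgeParity (u n) (v n) = 0) :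
    ∑ j ∈ Finset.range n, edgeParity (u j) (u (j + 1)) =
      ∑ j ∈ Finset.range n, edgeParity (v j) (v (j + 1)) := by
  rw [← sub_eq_zero, ← Finset.sum_sub_distrib]
  calc _ = ∑ j ∈ Finset.range n,
        (edgeParity (u (j + 1)) (v (j + 1)) - edgeParity (u j) (v j)) := by
        refine Finset.sum_congr rfl fun j hj ↦ ?_
        obtain ⟨h₁, h₂⟩ := h j (Finset.mem_range.mp hj)
        have h₁ := edgeParity_triangle _ _ _ h₁
        have h₂ := edgeParity_triangle _ _ _ h₂
        generalize edgeParity (u j) (u (j + 1)) = a at *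
        generalize edgeParity (u (j + 1)) (v (j + 1)) = b at *
        generalize edgeParity (u j) (v (j + 1)) = c at *
        generalize edgeParity (u j) (v j) = d at *
        generalize edgeParity (v j) (v (j + 1)) = e at *
        clear hbot htop
        revert a b c d e
        decide
    _ = 0 := by
        rw [Finset.sum_range_sub fun j ↦ edgeParity (u j) (v j), hbot, htop, sub_zero]

/-- If `[0, 1] × K` has covering dimension at most one, then `K` is totally disconnected.
Otherwise, a Sperner-type parity count over a nontrivial connected subset of `K` produces a point
lying in all three members of a cover. -/
theorem totallyDisconnectedSpace_of_dimLE_one {K : Type*} [MetricSpace K] [CompactSpace K]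
    (h : DimLE (unitInterval × K) 1) : TotallyDisconnectedSpace K := by
  refine ⟨fun C _ hC a ha b hb ↦ ?_⟩
  by_contra hab
  let F : Fin 3 → Set (unitInterval × K) := ![{p | p.2 = a}, {p | p.1 = 0}, {p | p.2 = b ∨ p.1 = 1}]
  have hF : ∀ i, IsClosed (F i) := by
    intro i
    fin_cases i
    · exact isClosed_eq continuous_snd continuous_const
    · exact isClosed_eq continuous_fst continuous_const
    · exact (isClosed_eq continuous_snd continuous_const).union
        (isClosed_eq continuous_fst continuous_const)
  obtain ⟨V, hVo, hVF, hVcov, hVcard⟩ := h (Fin 3) (fun i ↦ (F i)ᶜ)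
    (fun i ↦ (hF i).isOpen_compl) (by
      refine Set.eq_univ_of_forall fun p ↦ ?_
      by_contra hp
      have hp' : ∀ i, p ∈ F i := by simpa using hp
      have h₀ : p.2 = a := hp' 0
      have h₁ : p.1 = 0 := hp' 1
      have h₂ : p.2 = b ∨ p.1 = 1 := hp' 2
      rcases h₂ with h₂ | h₂
      · exact hab (h₀.symm.trans h₂)
      · exact zero_ne_one (h₁.symm.trans h₂))
  obtain ⟨δ, hδ, hball⟩ := lebesgue_number_lemma_of_metric isCompact_univ hVo hVcov.ge
  choose ℓ hℓ using fun p ↦ hball p (Set.mem_univ p)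
  have hℓF : ∀ p, p ∉ F (ℓ p) := fun p ↦ hVF _ (hℓ p (Metric.mem_ball_self hδ))
  have htri : ∀ p q r, dist p q < δ → dist p r < δ → ∃ l, l ≠ ℓ p ∧ l ≠ ℓ q ∧ l ≠ ℓ r := by
    intro p q r hq hr
    by_contra! hall
    have huniv : {i | p ∈ V i} = Set.univ := by
      refine Set.eq_univ_of_forall fun l ↦ ?_
      by_cases h₁ : l = ℓ p
      · exact h₁ ▸ hℓ p (Metric.mem_ball_self hδ)
      by_cases h₂ : l = ℓ q
      · exact h₂ ▸ hℓ q hq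
      · exact hall l h₁ h₂ ▸ hℓ r hr
    have hcard := hVcard p
    rw [huniv, Set.encard_univ, ENat.card_eq_coe_fintype_card, Fintype.card_fin] at hcard
    exact absurd hcard (by decide)
  obtain ⟨m, hm⟩ := exists_nat_one_div_lt hδ
  set n : ℕ := m + 1 with hn
  let q : ℕ → unitInterval := fun j ↦ Set.projIcc (0 : ℝ) 1 zero_le_one (j / n)
  have hn0 : (n : ℝ) ≠ 0 := by positivity
  have hq0 : q 0 = 0 := by simp [q]
  have hqn : q n = 1 := by simp [q, hn0]
  have hqd : ∀ j, dist (q j) (q (j + 1)) < δ := by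
    intro j
    refine lt_of_le_of_lt ?_ hm
    rw [Subtype.dist_eq, Real.dist_eq]
    refine (Set.abs_projIcc_sub_projIcc zero_le_one).trans ?_
    rw [← sub_div, abs_div, Nat.abs_cast]
    simp [hn]
  let S : K → ZMod 2 := fun c ↦
    ∑ j ∈ Finset.range n, edgeParity (ℓ (q j, c)) (ℓ (q (j + 1), c))
  have hS : ∀ c c', dist c c' < δ → S c = S c' := by
    intro c c' hc
    refine sum_edgeParity_congr n (fun j ↦ ℓ (q j, c)) (fun j ↦ ℓ (q j, c')) (fun j _ ↦ ⟨?_, ?_⟩)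
      ?_ ?_
    · refine htri _ _ _ ?_ ?_ <;> simp [Prod.dist_eq, hqd, hc]
    · refine htri _ _ _ ?_ ?_ <;> simp [Prod.dist_eq, hqd, hc]
    · refine edgeParity_eq_zero 1 _ _ (by decide) (fun h ↦ ?_) fun h ↦ ?_
      · exact hℓF (q 0, c) (h ▸ hq0)
      · exact hℓF (q 0, c') (h ▸ hq0)
    · refine edgeParity_eq_zero 2 _ _ (by decide) (fun h ↦ ?_) fun h ↦ ?_
      · exact hℓF (q n, c) (h ▸ Or.inr hqn)
      · exact hℓF (q n, c') (h ▸ Or.inr hqn)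
  have hSc : Continuous S := by
    refine (IsLocallyConstant.iff_eventually_eq S).mpr (fun c ↦ ?_) |>.continuous
    filter_upwards [Metric.ball_mem_nhds c hδ] with c' hc'
    exact hS c' c hc'
  have hSab : S a = S b := hC.constant hSc.continuousOn ha hb
  have hne2 : ∀ j, ℓ (q j, b) ≠ 2 := fun j h ↦ hℓF (q j, b) (h ▸ Or.inl rfl)
  have hne0 : ∀ j, ℓ (q j, a) ≠ 0 := fun j h ↦ hℓF (q j, a) (h ▸ rfl)
  have hSb : S b = 0 := Finset.sum_eq_zero fun j _ ↦
    edgeParity_eq_zero 2 _ _ (by decide) (hne2 j) (hne2 (j + 1))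
  have hbot : ℓ (q 0, a) ≠ 1 := fun h ↦ hℓF (q 0, a) (h ▸ hq0)
  have htop : ℓ (q n, a) = 1 := by
    have h₂ : ℓ (q n, a) ≠ 2 := fun h ↦ hℓF (q n, a) (h ▸ Or.inr hqn)
    have h₀ := hne0 n
    omega
  have hSa : S a = 1 := by
    calc S a = ∑ j ∈ Finset.range n,
          ((if ℓ (q (j + 1), a) = 1 then 1 else 0) - (if ℓ (q j, a) = 1 then 1 else 0)) :=
          Finset.sum_congr rfl fun j _ ↦ edgeParity_eq_sub _ _ (hne0 j) (hne0 (j + 1))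
      _ = 1 := by
          rw [Finset.sum_range_sub fun j ↦ if ℓ (q j, a) = 1 then (1 : ZMod 2) else 0,
            if_pos htop, if_neg hbot, sub_zero]
  exact one_ne_zero (hSa.symm.trans (hSab.trans hSb))

theorem invariant_inter_crossSection_zero_dim
    {X : Type*} [MetricSpace X] [CompactSpace X]
    (φ : ℝ → X → X)
    (hcont : Continuous fun p : ℝ × X => φ p.1 p.2)
    (h0 : ∀ x, φ 0 x = x)
    (hadd : ∀ t s : ℝ, ∀ x, φ (t + s) x = φ s (φ t x))
    (Λ : Set X) (hΛc : IsCompact Λ) (hΛinv : ∀ t : ℝ, φ t '' Λ = Λ)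
    (hΛdim : DimLE ↥Λ 1 ∧ ¬ DimLE ↥Λ 0)
    (x : X) (hxΛ : x ∈ Λ)
    (H : Set X) (τ : ℝ) (hτ : 0 < τ)
    (hHc : IsCompact H) (hxH : x ∈ H)
    (hnbhd : (⋃ s ∈ Set.Icc (-τ) τ, (fun y => φ s y) '' H) ∈ nhds x)
    (hcs : ∀ y ∈ H, ∀ s ∈ Set.Icc (-τ) τ, φ s y ∈ H → φ s y = y)
    (hinj : Set.InjOn (fun p : ℝ × X => φ p.1 p.2) (Set.Icc (-τ) τ ×ˢ H)) :
    DimLE ↥(Λ ∩ H) 0 := by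
  have hK : IsCompact (Λ ∩ H) := hΛc.inter hHc
  have : CompactSpace ↥(Λ ∩ H) := isCompact_iff_compactSpace.mp hK
  have hmem : ∀ p : unitInterval × ↥(Λ ∩ H), φ (τ * p.1) p.2 ∈ Λ := fun p ↦
    (hΛinv (τ * p.1)).subset ⟨p.2, p.2.2.1, rfl⟩
  have hIcc : ∀ s : unitInterval, τ * (s : ℝ) ∈ Set.Icc (-τ) τ := fun s ↦
    ⟨by nlinarith [s.2.1], by nlinarith [s.2.2]⟩
  have hf : Continuous fun p : unitInterval × ↥(Λ ∩ H) ↦ (⟨φ (τ * p.1) p.2, hmem p⟩ : ↥Λ) := by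
    refine Continuous.subtype_mk ?_ _
    exact hcont.comp (by fun_prop :
      Continuous fun p : unitInterval × ↥(Λ ∩ H) ↦ ((τ * p.1 : ℝ), (p.2 : X)))
  have hfinj : Function.Injective
      fun p : unitInterval × ↥(Λ ∩ H) ↦ (⟨φ (τ * p.1) p.2, hmem p⟩ : ↥Λ) := by
    rintro ⟨s, y⟩ ⟨s', y'⟩ h
    have h' := hinj (x₁ := (τ * s, (y : X))) ⟨hIcc s, y.2.2⟩
      (x₂ := (τ * s', (y' : X))) ⟨hIcc s', y'.2.2⟩ (congrArg Subtype.val h)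
    have h₁ : τ * (s : ℝ) = τ * s' := congrArg Prod.fst h'
    have h₂ : (y : X) = y' := congrArg Prod.snd h'
    exact Prod.ext (Subtype.ext (mul_left_cancel₀ hτ.ne' h₁)) (Subtype.ext h₂)
  have := totallyDisconnectedSpace_of_dimLE_one
    (hΛdim.1.of_isClosedEmbedding (hf.isClosedEmbedding hfinj))
  exact dimLE_zero_of_totallyDisconnectedSpace
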